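/- arXiv:2308.13114 — 5 statements merged into one kernel-verified Lean document; each statement's English description precedes it below -/
import Mathlib

section
/- Let X be a Banach space and let C be a nonempty, bounded, closed and convex subset of X. Let T : C → C be a continuous map. Suppose there exist τ > 0 and a function F : (0,∞) → ℝ satisfying (F1) and (F2) such that for every subset Ω ⊆ C with diam(T(Ω)) > 0 one has τ + F(diam(T(Ω))) ≤ F(diam(Ω)). Then T has at least one fixed point in C, and the set of fixed points of T has diameter zero; in particular T has exactly one fixed point. -/
/-!
The iterated images `T^[n] '' C` form a sequence of sets whose diameters tend to zero: if a diameter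
vanishes the later ones do too, and otherwise the contraction hypothesis gives
`F (diam (T^[n] '' C)) ≤ F (diam C) - n τ → -∞`, so (F2) applies. Since `T^[m] x` lies in
`T^[n] '' C` for `m ≥ n`, every orbit is Cauchy, and its limit is fixed by continuity. The set of
fixed points is its own image under `T`, so a positive diameter `d` would give `τ + F d ≤ F d`.
-/

open Filter Topology

/-- Lemma 1 with the diameter measure of noncompactness: an `F`-contraction
(in the sense of `diam`) on a nonempty bounded closed convex subset of a
Banach space has a unique fixed point, and the fixed point set has diameter zero. -/
theorem fixedPoint_of_F_contraction_diam
    {X : Type*} [NormedAddCommGroup X] [NormedSpace ℝ X] [CompleteSpace X]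
    (C : Set X) (hne : C.Nonempty) (hbd : Bornology.IsBounded C)
    (hcl : IsClosed C) (hcv : Convex ℝ C)
    (T : X → X) (hmaps : Set.MapsTo T C C) (hcont : ContinuousOn T C)
    (τ : ℝ) (hτ : 0 < τ) (F : ℝ → ℝ)
    (hF1 : StrictMonoOn F (Set.Ioi 0))
    (hF2 : ∀ α : ℕ → ℝ, (∀ n, 0 < α n) →
      (Tendsto α atTop (𝓝 0) ↔ Tendsto (fun n => F (α n)) atTop atBot))
    (hcontr : ∀ Ω : Set X, Ω ⊆ C → 0 < Metric.diam (T '' Ω) →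
      τ + F (Metric.diam (T '' Ω)) ≤ F (Metric.diam Ω)) :
    (∃ x ∈ C, T x = x) ∧ Metric.diam {x ∈ C | T x = x} = 0 ∧
      (∃! x, x ∈ C ∧ T x = x) := by
  have hCn : ∀ n, T^[n] '' C ⊆ C := fun n => (hmaps.iterate n).image_subset
  have hbn : ∀ n, Bornology.IsBounded (T^[n] '' C) := fun n => hbd.subset (hCn n)
  have hsucc : ∀ n, T^[n + 1] '' C = T '' (T^[n] '' C) := fun n => by
    rw [Function.iterate_succ', Set.image_comp]
  have hanti : ∀ n m, n ≤ m → T^[m] '' C ⊆ T^[n] '' C := by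
    rintro n m hnm _ ⟨x, hx, rfl⟩
    obtain ⟨k, rfl⟩ := Nat.exists_eq_add_of_le hnm
    exact ⟨T^[k] x, hmaps.iterate k hx, (Function.iterate_add_apply T n k x).symm⟩
  have hlim : Tendsto (fun n => Metric.diam (T^[n] '' C)) atTop (𝓝 0) := by
    by_cases hpos : ∀ n, 0 < Metric.diam (T^[n] '' C)
    · rw [hF2 _ hpos]
      have hle : ∀ n : ℕ, F (Metric.diam (T^[n] '' C)) ≤ F (Metric.diam C) + n * (-τ) := by
        intro n
        induction n with
        | zero => simp
        | succ n ih =>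
          have h := hcontr _ (hCn n) (by rw [← hsucc]; exact hpos (n + 1))
          rw [← hsucc] at h
          push_cast
          linarith
      refine tendsto_atBot_mono hle (tendsto_atBot_add_const_left _ _ ?_)
      exact tendsto_natCast_atTop_atTop.atTop_mul_const_of_neg (by linarith)
    · push Not at hpos
      obtain ⟨n, hn⟩ := hpos
      refine tendsto_const_nhds.congr' ?_
      filter_upwards [eventually_ge_atTop n] with m hm
      exact le_antisymm Metric.diam_nonneg
        ((Metric.diam_mono (hanti n m hm) (hbn n)).trans hn)
  have hdiam : Metric.diam {x ∈ C | T x = x} = 0 := by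
    by_contra h0
    have himg : T '' {x ∈ C | T x = x} = {x ∈ C | T x = x} := by
      ext y
      constructor
      · rintro ⟨x, ⟨hx, hTx⟩, rfl⟩
        exact ⟨hmaps hx, by rw [hTx, hTx]⟩
      · exact fun hy => ⟨y, hy, hy.2⟩
    have h := hcontr {x ∈ C | T x = x} (fun x hx => hx.1)
      (by rw [himg]; exact lt_of_le_of_ne Metric.diam_nonneg (Ne.symm h0))
    rw [himg] at h
    linarith
  have hex : ∃ x ∈ C, T x = x := by
    obtain ⟨x₀, hx₀⟩ := hne
    have hmem : ∀ n, T^[n] x₀ ∈ C := fun n => hmaps.iterate n hx₀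
    have hcau : CauchySeq (fun n => T^[n] x₀) := by
      refine cauchySeq_of_le_tendsto_0 _ (fun n m N hn hm => ?_) hlim
      exact Metric.dist_le_diam_of_mem (hbn N) (hanti N n hn ⟨x₀, hx₀, rfl⟩)
        (hanti N m hm ⟨x₀, hx₀, rfl⟩)
    obtain ⟨x, hx⟩ := cauchySeq_tendsto_of_complete hcau
    have hxC : x ∈ C := hcl.mem_of_tendsto hx (Eventually.of_forall hmem)
    refine ⟨x, hxC, ?_⟩
    have h1 : Tendsto (fun n => T (T^[n] x₀)) atTop (𝓝 (T x)) :=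
      (hcont x hxC).tendsto.comp
        (tendsto_nhdsWithin_iff.2 ⟨hx, Eventually.of_forall hmem⟩)
    have h2 : Tendsto (fun n => T (T^[n] x₀)) atTop (𝓝 x) := by
      simpa only [Function.comp_def, Function.iterate_succ_apply'] using
        hx.comp (tendsto_add_atTop_nat 1)
    exact tendsto_nhds_unique h1 h2
  refine ⟨hex, hdiam, ?_⟩
  obtain ⟨x, hx, hTx⟩ := hex
  refine ⟨x, ⟨hx, hTx⟩, fun y hy => dist_le_zero.1 ?_⟩
  rw [← hdiam]
  exact Metric.dist_le_diam_of_mem (hbd.subset fun z hz => hz.1) hy ⟨hx, hTx⟩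
end

section
/- Let X be a Banach space and let C be a nonempty, bounded, closed and convex subset of X. Let T : C → C be a continuous map. Suppose there exist τ > 0 and a function F : (0,∞) → ℝ satisfying (F1) and (F2) such that for every subset Ω ⊆ C with sup_{x ∈ T(Ω)} ‖x‖ > 0 one has τ + F(sup_{x ∈ T(Ω)} ‖x‖) ≤ F(sup_{x ∈ Ω} ‖x‖). Then T has at least one fixed point in C, and every fixed point of T equals 0; in particular 0 ∈ C and T(0) = 0. -/
/-!
Applied to singletons, the hypothesis says `τ + F ‖T x‖ ≤ F ‖x‖` whenever `T x ≠ 0`. Hence a nonzero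
fixed point is impossible, and along an orbit that never hits `0` the values `F ‖T^[n] x‖` decrease
by at least `τ` at each step, so by (F2) the orbit converges to `0`; in either case `0 ∈ C`, as `C`
is closed. If `T 0 = y ≠ 0`, the set `{0, y}` violates the hypothesis: with
`s = sup ‖T {0, y}‖ ≥ ‖y‖` one gets `τ + F s ≤ F ‖y‖ ≤ F s`. The pair is needed instead of `{0}`
because `F 0` carries no information.
-/

open Filter Topology

/-- Lemma 1 with the norm measure of noncompactness `μ(Ω) = sup_{x ∈ Ω} ‖x‖`:
an `F`-contraction (in the sense of this measure) on a nonempty bounded closed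
convex subset of a Banach space has a fixed point, and every fixed point is `0`. -/
theorem fixedPoint_of_F_contraction_normSup
    {X : Type*} [NormedAddCommGroup X] [NormedSpace ℝ X] [CompleteSpace X]
    (C : Set X) (hne : C.Nonempty) (hbd : Bornology.IsBounded C)
    (hcl : IsClosed C) (hcv : Convex ℝ C)
    (T : X → X) (hmaps : Set.MapsTo T C C) (hcont : ContinuousOn T C)
    (τ : ℝ) (hτ : 0 < τ) (F : ℝ → ℝ)
    (hF1 : StrictMonoOn F (Set.Ioi 0))
    (hF2 : ∀ α : ℕ → ℝ, (∀ n, 0 < α n) →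
      (Tendsto α atTop (𝓝 0) ↔ Tendsto (fun n => F (α n)) atTop atBot))
    (hcontr : ∀ Ω : Set X, Ω ⊆ C → 0 < sSup ((fun x => ‖x‖) '' (T '' Ω)) →
      τ + F (sSup ((fun x => ‖x‖) '' (T '' Ω))) ≤ F (sSup ((fun x => ‖x‖) '' Ω))) :
    (∃ x ∈ C, T x = x) ∧ (∀ x ∈ C, T x = x → x = 0) ∧ (0 : X) ∈ C ∧ T 0 = 0 := by
  have hpt : ∀ x ∈ C, T x ≠ 0 → τ + F ‖T x‖ ≤ F ‖x‖ := by
    intro x hx hTx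
    have h := hcontr {x} (by simpa using hx)
    simp only [Set.image_singleton, csSup_singleton] at h
    exact h (norm_pos_iff.mpr hTx)
  have hfix : ∀ x ∈ C, T x = x → x = 0 := by
    intro x hx hTx
    by_contra hx0
    have h := hpt x hx (by rwa [hTx])
    rw [hTx] at h
    linarith
  have h0 : (0 : X) ∈ C := by
    obtain ⟨x, hx⟩ := hne
    have hmem : ∀ n, T^[n] x ∈ C := fun n => hmaps.iterate n hx
    by_cases hz : ∃ n, T^[n] x = 0
    · obtain ⟨n, hn⟩ := hz
      exact hn ▸ hmem n
    · push Not at hz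
      have hle : ∀ n : ℕ, F ‖T^[n] x‖ ≤ F ‖x‖ - n * τ := by
        intro n
        induction n with
        | zero => simp
        | succ k ih =>
          have hk := hz (k + 1)
          rw [Function.iterate_succ_apply'] at hk ⊢
          have h := hpt _ (hmem k) hk
          push_cast
          linarith
      have hlim : Tendsto (fun n : ℕ => F ‖x‖ - n * τ) atTop atBot :=
        tendsto_atBot_add_const_left _ _
          (tendsto_neg_atTop_atBot.comp (tendsto_natCast_atTop_atTop.atTop_mul_const hτ))
      have hnorm : Tendsto (fun n => ‖T^[n] x‖) atTop (𝓝 0) :=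
        (hF2 _ fun n => norm_pos_iff.mpr (hz n)).mpr (tendsto_atBot_mono hle hlim)
      exact hcl.mem_of_tendsto (tendsto_zero_iff_norm_tendsto_zero.mpr hnorm)
        (Eventually.of_forall hmem)
  have hT0 : T 0 = 0 := by
    by_contra hy
    have hpos : 0 < ‖T 0‖ := norm_pos_iff.mpr hy
    have h := hcontr {0, T 0} (Set.insert_subset h0 (by simpa using hmaps h0))
    simp only [Set.image_pair, csSup_pair, norm_zero] at h
    rw [sup_eq_right.mpr hpos.le] at h
    have hs : ‖T 0‖ ≤ ‖T 0‖ ⊔ ‖T (T 0)‖ := le_sup_left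
    have h1 := h (hpos.trans_le hs)
    have h2 := hF1.monotoneOn hpos (hpos.trans_le hs) hs
    linarith
  exact ⟨⟨0, h0, hT0⟩, hfix, h0, hT0⟩
end

section
/- Let X be a Banach space and let C be a nonempty, bounded, closed and convex subset of X. Let T : C → X be a continuous map such that C ⊆ T(C). Suppose there exist τ > 0 and a function F : (0,∞) → ℝ satisfying (F1) and (F2) such that for every subset Ω ⊆ C with diam(Ω) > 0 one has τ + F(diam(Ω)) ≤ F(diam(T(Ω))). Then T has at least one fixed point in C, and the set of fixed points of T has diameter zero; in particular T has exactly one fixed point. -/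
/-!
Only two-point sets `{x, y}` are needed: on them the hypothesis reads
`τ + F (dist x y) ≤ F (dist (T x) (T y))`, which is informative as long as `T x ≠ T y`, since `F 0` is an
arbitrary value.  Injectivity of `T` on `C` therefore needs an argument
(`injOn_of_expanding_or_eq`): if `T x = T y` with `x ≠ y`, then `z ↦ dist (T x) (T z)` is continuous
on the connected set `C` and takes only the value `0` and values above `dist x y / 2`, so it
vanishes, `T` is constant on `C`,
and `C ⊆ T '' C` forces `C` to be a point.

Choosing preimages gives a backward orbit `x₀, x₁, …` in `C` with `T xₙ₊₁ = xₙ`, along which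
`F (dist xₙ xₙ₊ₘ) ≤ F (diam C + 1) - n τ`.  Hence the orbit is Cauchy, and its limit is a fixed
point by continuity of `T`.  Two distinct fixed points would give `τ + F d ≤ F d`.
-/

open Filter Topology

/-- A continuous map on a preconnected set `C ⊆ T '' C` is injective on `C` as soon as any two
points with different images are strictly driven apart. -/
lemma injOn_of_expanding_or_eq {X : Type*} [MetricSpace X] {C : Set X} (hC : IsPreconnected C)
    {T : X → X} (hcont : ContinuousOn T C) (hsub : C ⊆ T '' C)
    (h : ∀ u ∈ C, ∀ v ∈ C, T u ≠ T v → dist u v < dist (T u) (T v)) : Set.InjOn T C := by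
  intro x hx y hy hxy
  by_contra hne
  have hr : 0 < dist x y := dist_pos.2 hne
  -- Every `z` with `T z ≠ T x` is far from `x` or from `y`, so its image is far from `T x = T y`.
  have gap : ∀ z ∈ C, T x ≠ T z → dist x y / 2 < dist (T x) (T z) := by
    intro z hz hxz
    have h1 := h x hx z hz hxz
    have h2 := h y hy z hz (hxy ▸ hxz)
    rw [← hxy] at h2
    have h3 := dist_triangle_right x y z
    linarith
  have const : ∀ z ∈ C, T x = T z := by
    intro z hz
    by_contra hxz
    have hf : ContinuousOn (fun w => dist (T x) (T w)) C := by fun_prop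
    obtain ⟨w, hw, hwr⟩ := hC.intermediate_value hx hz hf
      (show dist x y / 2 ∈ Set.Icc (dist (T x) (T x)) (dist (T x) (T z)) from
        ⟨by rw [dist_self]; positivity, (gap z hz hxz).le⟩)
    have hwr' : dist (T x) (T w) = dist x y / 2 := hwr
    have hxw : T x ≠ T w := by
      intro he
      rw [he, dist_self] at hwr'
      linarith
    exact absurd (gap w hw hxw) (by rw [hwr']; exact lt_irrefl _)
  obtain ⟨a, ha, rfl⟩ := hsub hx
  obtain ⟨b, hb, rfl⟩ := hsub hy
  exact hne ((const a ha).symm.trans (const b hb))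

/-- Main theorem with the diameter measure of noncompactness: a continuous
`F`-expanding map `T : C → X` with `C ⊆ T(C)` on a nonempty bounded closed
convex subset of a Banach space has a unique fixed point, and the fixed point
set has diameter zero. -/
theorem fixedPoint_of_F_expanding_diam
    {X : Type*} [NormedAddCommGroup X] [NormedSpace ℝ X] [CompleteSpace X]
    (C : Set X) (hne : C.Nonempty) (hbd : Bornology.IsBounded C)
    (hcl : IsClosed C) (hcv : Convex ℝ C)
    (T : X → X) (hcont : ContinuousOn T C) (hsub : C ⊆ T '' C)
    (τ : ℝ) (hτ : 0 < τ) (F : ℝ → ℝ)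
    (hF1 : StrictMonoOn F (Set.Ioi 0))
    (hF2 : ∀ α : ℕ → ℝ, (∀ n, 0 < α n) →
      (Tendsto α atTop (𝓝 0) ↔ Tendsto (fun n => F (α n)) atTop atBot))
    (hexp : ∀ Ω : Set X, Ω ⊆ C → 0 < Metric.diam Ω →
      τ + F (Metric.diam Ω) ≤ F (Metric.diam (T '' Ω))) :
    (∃ x ∈ C, T x = x) ∧ Metric.diam {x ∈ C | T x = x} = 0 ∧
      (∃! x, x ∈ C ∧ T x = x) := by
  have pair : ∀ u ∈ C, ∀ v ∈ C, u ≠ v → τ + F (dist u v) ≤ F (dist (T u) (T v)) := by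
    intro u hu v hv huv
    have := hexp {u, v} (Set.insert_subset hu (Set.singleton_subset_iff.2 hv))
      (by rw [Metric.diam_pair]; exact dist_pos.2 huv)
    rwa [Set.image_pair, Metric.diam_pair, Metric.diam_pair] at this
  have inj : Set.InjOn T C := by
    refine injOn_of_expanding_or_eq hcv.isPreconnected hcont hsub fun u hu v hv huv => ?_
    have hne' : u ≠ v := fun e => huv (congrArg T e)
    have := pair u hu v hv hne'
    exact (hF1.lt_iff_lt (dist_pos.2 hne') (dist_pos.2 huv)).1 (by linarith)
  have uniq : ∀ u ∈ C, ∀ v ∈ C, T u = u → T v = v → u = v := by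
    intro u hu v hv hTu hTv
    by_contra huv
    have := pair u hu v hv huv
    rw [hTu, hTv] at this
    linarith
  have hex : ∃ x ∈ C, T x = x := by
    have hpre : ∀ y ∈ C, ∃ z, z ∈ C ∧ T z = y := fun y hy => hsub hy
    choose! S hS using hpre
    obtain ⟨x₀, hx₀⟩ := hne
    let x : ℕ → X := fun n => S^[n] x₀
    have hxs : ∀ n, x (n + 1) = S (x n) := fun n => Function.iterate_succ_apply' S n x₀
    have hxC : ∀ n, x n ∈ C := by
      intro n
      induction n with
      | zero => exact hx₀
      | succ n ih => rw [hxs]; exact (hS _ ih).1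
    have hTx : ∀ n, T (x (n + 1)) = x n := fun n => by rw [hxs]; exact (hS _ (hxC n)).2
    -- The bound `diam C + 1` rather than `diam C` keeps the argument of `F` positive.
    have key : ∀ n m, x n ≠ x (n + m) →
        n * τ + F (dist (x n) (x (n + m))) ≤ F (Metric.diam C + 1) := by
      intro n m
      induction n with
      | zero =>
        intro hnm
        have h1 := Metric.dist_le_diam_of_mem hbd (hxC 0) (hxC (0 + m))
        have h2 := hF1.monotoneOn (dist_pos.2 hnm)
          (Set.mem_Ioi.2 (by positivity : 0 < Metric.diam C + 1)) (by linarith)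
        simpa using h2
      | succ n ih =>
        intro hnm
        have e : n + 1 + m = n + m + 1 := by omega
        rw [e] at hnm ⊢
        have h1 := pair _ (hxC _) _ (hxC _) hnm
        have h2 : x n ≠ x (n + m) := by
          intro h
          exact hnm (inj (hxC _) (hxC _) (by rw [hTx, hTx, h]))
        rw [hTx, hTx] at h1
        have h3 := ih h2
        push_cast
        linarith
    have hcau : CauchySeq x := by
      rw [Metric.cauchySeq_iff']
      intro ε hε
      obtain ⟨N, hN⟩ := exists_nat_gt ((F (Metric.diam C + 1) - F ε) / τ)
      rw [div_lt_iff₀ hτ] at hN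
      refine ⟨N, fun n hn => ?_⟩
      obtain ⟨m, rfl⟩ := Nat.exists_eq_add_of_le hn
      rw [dist_comm]
      by_contra! hge
      have hpos : 0 < dist (x N) (x (N + m)) := hε.trans_le hge
      have h1 := key N m (dist_pos.1 hpos)
      have h2 := hF1.monotoneOn hε hpos hge
      linarith
    obtain ⟨p, hp⟩ := cauchySeq_tendsto_of_complete hcau
    have hpC : p ∈ C := hcl.mem_of_tendsto hp (Eventually.of_forall hxC)
    refine ⟨p, hpC, ?_⟩
    have h1 : Tendsto (fun n => x (n + 1)) atTop (𝓝[C] p) :=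
      tendsto_nhdsWithin_iff.2
        ⟨(tendsto_add_atTop_iff_nat 1).2 hp, Eventually.of_forall fun n => hxC (n + 1)⟩
    have h2 : Tendsto (fun n => T (x (n + 1))) atTop (𝓝 (T p)) := (hcont p hpC).tendsto.comp h1
    simp only [hTx] at h2
    exact tendsto_nhds_unique h2 hp
  refine ⟨hex, Metric.diam_subsingleton fun u hu v hv => uniq u hu.1 v hv.1 hu.2 hv.2, ?_⟩
  obtain ⟨p, hpC, hTp⟩ := hex
  exact ⟨p, ⟨hpC, hTp⟩, fun q hq => uniq q hq.1 p hpC hq.2 hTp⟩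
end

section
/- Let X be a Banach space and let C be a nonempty, bounded, closed and convex subset of X. Let T : C → X be a continuous map such that C ⊆ T(C). Suppose there exist τ > 0 and a function F : (0,∞) → ℝ satisfying (F1) and (F2) such that for every subset Ω ⊆ C with sup_{x ∈ Ω} ‖x‖ > 0 one has τ + F(sup_{x ∈ Ω} ‖x‖) ≤ F(sup_{x ∈ T(Ω)} ‖x‖). Then T has at least one fixed point in C, and every fixed point of T equals 0; in particular 0 ∈ C and T(0) = 0. -/
/-!
Testing the expansion hypothesis on singletons gives `τ + F ‖x‖ ≤ F ‖T x‖` for `0 ≠ x ∈ C`, which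
excludes nonzero fixed points. If `0 ∉ C`, a backward orbit `T xₙ₊₁ = xₙ` in `C` satisfies
`F ‖xₙ‖ ≤ F ‖x₀‖ - n τ`, so `‖xₙ‖ → 0` by (F2) and `0 ∈ C` by closedness, a contradiction.
Hence `0 ∈ C ⊆ T(C)`, so `T z = 0` for some `z ∈ C`.

In the formal statement `F 0` is an arbitrary real number, so the expansion inequality alone does
not exclude `z ≠ 0`. It does give, for `0 ≠ x ∈ C`, that `T x = 0` or `‖x‖ < ‖T x‖`; if `z ≠ 0` and
`T 0 ≠ 0`, the intermediate value theorem on the segment `[0, z]` yields a point `x ≠ 0` with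
`‖T x‖ = ‖x‖ / 2`, contradicting this dichotomy. So `T 0 = 0` in every case.
-/

open Filter Topology

/-- Main theorem with the norm measure of noncompactness `μ(Ω) = sup_{x ∈ Ω} ‖x‖`:
a continuous `F`-expanding map `T : C → X` with `C ⊆ T(C)` on a nonempty bounded
closed convex subset of a Banach space has a fixed point, and every fixed point is `0`. -/
theorem fixedPoint_of_F_expanding_normSup
    {X : Type*} [NormedAddCommGroup X] [NormedSpace ℝ X] [CompleteSpace X]
    (C : Set X) (hne : C.Nonempty) (hbd : Bornology.IsBounded C)
    (hcl : IsClosed C) (hcv : Convex ℝ C)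
    (T : X → X) (hcont : ContinuousOn T C) (hsub : C ⊆ T '' C)
    (τ : ℝ) (hτ : 0 < τ) (F : ℝ → ℝ)
    (hF1 : StrictMonoOn F (Set.Ioi 0))
    (hF2 : ∀ α : ℕ → ℝ, (∀ n, 0 < α n) →
      (Tendsto α atTop (𝓝 0) ↔ Tendsto (fun n => F (α n)) atTop atBot))
    (hexp : ∀ Ω : Set X, Ω ⊆ C → 0 < sSup ((fun x => ‖x‖) '' Ω) →
      τ + F (sSup ((fun x => ‖x‖) '' Ω)) ≤ F (sSup ((fun x => ‖x‖) '' (T '' Ω)))) :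
    (∃ x ∈ C, T x = x) ∧ (∀ x ∈ C, T x = x → x = 0) ∧ (0 : X) ∈ C ∧ T 0 = 0 := by
  have single : ∀ x ∈ C, x ≠ 0 → τ + F ‖x‖ ≤ F ‖T x‖ := by
    intro x hx hx0
    simpa [hx0] using hexp {x} (by simpa using hx)
  have hfix : ∀ x ∈ C, T x = x → x = 0 := by
    intro x hx hTx
    by_contra hx0
    have h := single x hx hx0
    rw [hTx] at h
    linarith
  have hgrow : ∀ x ∈ C, x ≠ 0 → T x ≠ 0 → ‖x‖ < ‖T x‖ := by
    intro x hx hx0 hT0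
    have h := single x hx hx0
    exact (hF1.lt_iff_lt (norm_pos_iff.2 hx0) (norm_pos_iff.2 hT0)).1 (by linarith)
  have h0C : (0 : X) ∈ C := by
    by_contra h0
    have hne0 : ∀ x ∈ C, x ≠ 0 := fun x hx h => h0 (h ▸ hx)
    obtain ⟨x₀, hx₀⟩ := hne
    choose! S hSC hTS using hsub
    have hmem : ∀ n, S^[n] x₀ ∈ C := by
      intro n
      induction n with
      | zero => exact hx₀
      | succ n ih => rw [Function.iterate_succ_apply']; exact hSC ih
    have hF : ∀ n : ℕ, F ‖S^[n] x₀‖ ≤ F ‖x₀‖ - n * τ := by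
      intro n
      induction n with
      | zero => simp
      | succ n ih =>
        have h := single _ (hmem (n + 1)) (hne0 _ (hmem _))
        rw [Function.iterate_succ_apply', hTS (hmem n)] at h
        rw [Function.iterate_succ_apply']
        push_cast
        linarith
    have hlin : Tendsto (fun n : ℕ => F ‖x₀‖ - n * τ) atTop atBot :=
      tendsto_atBot_add_const_left _ _
        (tendsto_neg_atTop_atBot.comp (tendsto_natCast_atTop_atTop.atTop_mul_const hτ))
    have hnorm := (hF2 (fun n => ‖S^[n] x₀‖) fun n => norm_pos_iff.2 (hne0 _ (hmem n))).2
      (tendsto_atBot_mono hF hlin)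
    exact h0 (hcl.mem_of_tendsto (tendsto_zero_iff_norm_tendsto_zero.2 hnorm)
      (Eventually.of_forall hmem))
  have hT0 : T 0 = 0 := by
    obtain ⟨z, hz, hTz⟩ := hsub h0C
    by_contra hT
    have hz0 : z ≠ 0 := fun h => hT (h ▸ hTz)
    have hzpos : 0 < ‖z‖ := norm_pos_iff.2 hz0
    have hseg : ∀ s ∈ Set.Icc (0 : ℝ) 1, s • z ∈ C := fun s hs =>
      hcv.smul_mem_of_zero_mem h0C hz hs
    have hc : ContinuousOn (fun s : ℝ => ‖T (s • z)‖ - s * ‖z‖ / 2) (Set.Icc 0 1) := by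
      refine ContinuousOn.sub (ContinuousOn.norm (hcont.comp ?_ hseg)) ?_ <;> fun_prop
    -- The function is positive at `0`, where `T 0 ≠ 0`, and negative at `1`, where `T z = 0`.
    obtain ⟨s, hs, hval⟩ := intermediate_value_Icc' zero_le_one hc
      (show (0 : ℝ) ∈ _ by
        constructor
        · simp [hTz]; positivity
        · simp)
    simp only at hval
    have hs0 : s ≠ 0 := by
      rintro rfl
      simp [hT] at hval
    have hspos : 0 < s := lt_of_le_of_ne hs.1 hs0.symm
    have hprod : 0 < s * ‖z‖ := mul_pos hspos hzpos
    have hTs : T (s • z) ≠ 0 := norm_pos_iff.1 (by linarith)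
    have h := hgrow _ (hseg s hs) (smul_ne_zero hs0 hz0) hTs
    rw [norm_smul, Real.norm_of_nonneg hs.1] at h
    linarith
  exact ⟨⟨0, h0C, hT0⟩, hfix, h0C, hT0⟩
end

section
/- Let X be a Banach space and let C be a nonempty, bounded, closed and convex subset of X. Let T : C → X be a continuous map such that C ⊆ T(C). Suppose there exist τ > 0 and a function F : (0,∞) → ℝ satisfying (F1) and (F2) such that for all x, y ∈ C with x ≠ y one has τ + F(‖x − y‖) ≤ F(‖T(x) − T(y)‖). Then T has a fixed point in C. -/
/-!
Choose a right inverse `s : C → C` of `T`, which exists because `C ⊆ T(C)`. Distinct points of `C`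
have distinct images under `s`, so the hypothesis on `T` says that `s` is an `F`-contraction:
`F ‖s x - s y‖ + τ ≤ F ‖x - y‖`. After `n` iterations this becomes
`F ‖sⁿ x - sⁿ y‖ + n τ ≤ F ‖x - y‖ ≤ F D`, where `D` bounds the distances in `C`. By monotonicity of
`F`, the diameter of `sⁿ(C)` tends to zero, so every orbit of `s` is Cauchy. Its limit `p` lies in
`C`, and passing to the limit in `T (sⁿ⁺¹ x) = sⁿ x` gives `T p = p`.

The value `F 0`, which has no meaning in the theorem, never enters: `F` is evaluated only at
distances between distinct points.
-/

open Filter Topology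

/-- Corollary of the main theorem: a continuous pointwise `F`-expanding map
`T : C → X` with `C ⊆ T(C)` on a nonempty bounded closed convex subset of a
Banach space has a fixed point in `C`. -/
theorem fixedPoint_of_pointwise_F_expanding
    {X : Type*} [NormedAddCommGroup X] [NormedSpace ℝ X] [CompleteSpace X]
    (C : Set X) (hne : C.Nonempty) (hbd : Bornology.IsBounded C)
    (hcl : IsClosed C) (hcv : Convex ℝ C)
    (T : X → X) (hcont : ContinuousOn T C) (hsub : C ⊆ T '' C)
    (τ : ℝ) (hτ : 0 < τ) (F : ℝ → ℝ)
    (hF1 : StrictMonoOn F (Set.Ioi 0))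
    (hF2 : ∀ α : ℕ → ℝ, (∀ n, 0 < α n) →
      (Tendsto α atTop (𝓝 0) ↔ Tendsto (fun n => F (α n)) atTop atBot))
    (hexp : ∀ x ∈ C, ∀ y ∈ C, x ≠ y → τ + F ‖x - y‖ ≤ F ‖T x - T y‖) :
    ∃ x ∈ C, T x = x := by
  obtain ⟨x₀, hx₀⟩ := hne
  have hsub' : ∀ x ∈ C, ∃ y, y ∈ C ∧ T y = x := fun x hx => hsub hx
  have : Nonempty X := ⟨x₀⟩
  choose! s hsC hTs using hsub'
  have hiter : ∀ (n : ℕ), ∀ x ∈ C, s^[n] x ∈ C := by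
    intro n
    induction n with
    | zero => intro x hx; simpa using hx
    | succ k ih => intro x hx; exact ih _ (hsC x hx)
  have hcontr : ∀ (n : ℕ), ∀ x ∈ C, ∀ y ∈ C, s^[n] x ≠ s^[n] y →
      F ‖s^[n] x - s^[n] y‖ + n * τ ≤ F ‖x - y‖ := by
    intro n
    induction n with
    | zero => intro x _ y _ _; simp
    | succ k ih =>
      intro x hx y hy hxy
      rw [Function.iterate_succ_apply, Function.iterate_succ_apply] at hxy ⊢
      have h1 := ih _ (hsC x hx) _ (hsC y hy) hxy
      have hne : s x ≠ s y := fun h => hxy (by rw [h])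
      have h2 := hexp _ (hsC x hx) _ (hsC y hy) hne
      rw [hTs x hx, hTs y hy] at h2
      push_cast
      linarith
  obtain ⟨D, hD0, hD⟩ : ∃ D : ℝ, 0 < D ∧ ∀ x ∈ C, ∀ y ∈ C, ‖x - y‖ ≤ D := by
    obtain ⟨R, hR⟩ := Metric.isBounded_iff.1 hbd
    refine ⟨max R 1, by positivity, fun x hx y hy => ?_⟩
    rw [← dist_eq_norm]
    exact (hR hx hy).trans (le_max_left _ _)
  have hsmall : ∀ ε > 0, ∃ N : ℕ, ∀ x ∈ C, ∀ y ∈ C, ‖s^[N] x - s^[N] y‖ < ε := by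
    intro ε hε
    obtain ⟨N, hN⟩ := exists_nat_gt ((F D - F ε) / τ)
    rw [div_lt_iff₀ hτ] at hN
    refine ⟨N, fun x hx y hy => ?_⟩
    by_cases h : s^[N] x = s^[N] y
    · simpa [h] using hε
    · have hxy : x ≠ y := fun e => h (by rw [e])
      have h1 := hcontr N x hx y hy h
      have h2 : F ‖x - y‖ ≤ F D :=
        hF1.monotoneOn (norm_pos_iff.2 (sub_ne_zero.2 hxy)) hD0 (hD x hx y hy)
      refine (hF1.lt_iff_lt (norm_pos_iff.2 (sub_ne_zero.2 h)) hε).1 ?_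
      linarith
  have hcauchy : CauchySeq (fun n => s^[n] x₀) := by
    refine Metric.cauchySeq_iff'.2 fun ε hε => ?_
    obtain ⟨N, hN⟩ := hsmall ε hε
    refine ⟨N, fun n hn => ?_⟩
    obtain ⟨k, rfl⟩ := Nat.exists_eq_add_of_le hn
    rw [Function.iterate_add_apply, dist_eq_norm]
    exact hN _ (hiter k x₀ hx₀) _ hx₀
  obtain ⟨p, hp⟩ := cauchySeq_tendsto_of_complete hcauchy
  have hpC : p ∈ C := hcl.mem_of_tendsto hp (Eventually.of_forall fun n => hiter n x₀ hx₀)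
  refine ⟨p, hpC, ?_⟩
  have hp1 : Tendsto (fun n => s^[n + 1] x₀) atTop (𝓝 p) := (tendsto_add_atTop_iff_nat 1).2 hp
  have hT : Tendsto (fun n => T (s^[n + 1] x₀)) atTop (𝓝 (T p)) :=
    (hcont p hpC).tendsto.comp (tendsto_nhdsWithin_iff.2
      ⟨hp1, Eventually.of_forall fun n => hiter (n + 1) x₀ hx₀⟩)
  refine tendsto_nhds_unique hT (hp.congr fun n => ?_)
  rw [Function.iterate_succ_apply', hTs _ (hiter n x₀ hx₀)]
end
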